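/- arXiv:1407.6448 — 2 statements merged into one kernel-verified Lean document; each statement's English description precedes it below -/
import Mathlib

section
/- Let a = 1 and γ > 0 and let A and L be the Timoshenko coefficient matrices (with a = 1). Then there exist constants C > 0 and c > 0 such that for every ξ ∈ ℝ and every differentiable function û : [0,∞) → ℂ⁴ satisfying û′(t) + iξA û(t) + L û(t) = 0 for all t ≥ 0, one has |û(t)| ≤ C e^{−c ρ(ξ) t} |û(0)| for all t ≥ 0, where ρ(ξ) := ξ²/(1 + ξ²). -/
open Matrix BigOperators Finset

noncomputable section

/-- Complexification of a real matrix. -/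
def cmap {a b : ℕ} (X : Matrix (Fin a) (Fin b) ℝ) : Matrix (Fin a) (Fin b) ℂ :=
  X.map (fun x => (x : ℂ))

/-- Real part of the standard Hermitian inner product `⟨x, y⟩ = ∑ xᵢ conj yᵢ` on `ℂᵐ`. -/
def reIP {m : ℕ} (x y : Fin m → ℂ) : ℝ := (∑ i, x i * (starRingEnd ℂ) (y i)).re

/-- Symmetric part `X₁ = (X + Xᵀ)/2` of a real square matrix. -/
def symP {m : ℕ} (X : Matrix (Fin m) (Fin m) ℝ) : Matrix (Fin m) (Fin m) ℝ :=
  (2⁻¹ : ℝ) • (X + Xᵀ)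

/-- Skew-symmetric part `X₂ = (X − Xᵀ)/2` of a real square matrix. -/
def skewP {m : ℕ} (X : Matrix (Fin m) (Fin m) ℝ) : Matrix (Fin m) (Fin m) ℝ :=
  (2⁻¹ : ℝ) • (X - Xᵀ)

/-- Kernel of (the complexification of) a real matrix, as a subset of `ℂᵐ`. -/
def kerC {m : ℕ} (L : Matrix (Fin m) (Fin m) ℝ) : Set (Fin m → ℂ) :=
  {z | (cmap L).mulVec z = 0}

/-- Euclidean norm on `ℂᵐ`. -/
def cnrm {m : ℕ} (z : Fin m → ℂ) : ℝ := Real.sqrt (∑ i, Complex.normSq (z i))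

/-- Coefficient matrix `A` of the Timoshenko system. -/
def TimA (a : ℝ) : Matrix (Fin 4) (Fin 4) ℝ :=
  -(!![0, 1, 0, 0; 1, 0, 0, 0; 0, 0, 0, a; 0, 0, a, 0])

/-- Relaxation matrix `L` of the Timoshenko system. -/
def TimL (γ : ℝ) : Matrix (Fin 4) (Fin 4) ℝ :=
  !![0, 0, 0, 1; 0, 0, 0, 0; 0, 0, 0, 0; -1, 0, 0, γ]

lemma tim_alg (γ ε ξ s r v1 v2 p1 p2 z1 z2 y1 y2 : ℝ) (hγ : 0 < γ)
    (hε : 0 < ε) (hεγ : ε * (2 + γ ^ 2) = γ) (hr0 : 0 ≤ r) (hr1 : r ≤ 1)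
    (hs : s * ξ = r) (hsr : s ^ 2 ≤ r) :
    2 * (v1 * (-ξ * p2 - y1) + v2 * (ξ * p1 - y2) + p1 * (-ξ * v2) + p2 * (ξ * v1)
      + z1 * (-ξ * y2) + z2 * (ξ * y1) + y1 * (-ξ * z2 + v1 - γ * y1)
      + y2 * (ξ * z1 + v2 - γ * y2))
    - ε * (((-ξ * p2 - y1) * y1 + v1 * (-ξ * z2 + v1 - γ * y1))
      + ((ξ * p1 - y2) * y2 + v2 * (ξ * z1 + v2 - γ * y2))
      + ((-ξ * v2) * z1 + p1 * (-ξ * y2)) + ((ξ * v1) * z2 + p2 * (ξ * y1)))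
    + ε / 8 * s * (((-ξ * p2 - y1) * p2 + v1 * (ξ * v1))
      - ((ξ * p1 - y2) * p1 + v2 * (-ξ * v2))
      + ((-ξ * z2 + v1 - γ * y1) * z2 + y1 * (ξ * y1))
      - ((ξ * z1 + v2 - γ * y2) * z1 + y2 * (-ξ * y2)))
    ≤ -(ε / 16 * r * (v1 ^ 2 + v2 ^ 2 + p1 ^ 2 + p2 ^ 2 + z1 ^ 2 + z2 ^ 2 + y1 ^ 2 + y2 ^ 2)) := by
  have h1 : γ * (v1 * y1 + v2 * y2) ≤ (v1 ^ 2 + v2 ^ 2) / 2 + γ ^ 2 / 2 * (y1 ^ 2 + y2 ^ 2) := by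
    nlinarith [sq_nonneg (v1 - γ * y1), sq_nonneg (v2 - γ * y2)]
  have hp : s ^ 2 * (p1 ^ 2 + p2 ^ 2) ≤ r * (p1 ^ 2 + p2 ^ 2) := by gcongr
  have hz : s ^ 2 * (z1 ^ 2 + z2 ^ 2) ≤ r * (z1 ^ 2 + z2 ^ 2) := by gcongr
  have h2 : s * (y2 * p1 - y1 * p2) ≤ r / 2 * (p1 ^ 2 + p2 ^ 2) + (y1 ^ 2 + y2 ^ 2) / 2 := by
    nlinarith [sq_nonneg (y2 - s * p1), sq_nonneg (y1 + s * p2)]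
  have h3 : s * (v1 * z2 - v2 * z1) ≤ r / 4 * (z1 ^ 2 + z2 ^ 2) + (v1 ^ 2 + v2 ^ 2) := by
    nlinarith [sq_nonneg (v1 - s / 2 * z2), sq_nonneg (v2 + s / 2 * z1)]
  have h4 : s * γ * (y2 * z1 - y1 * z2) ≤
      r / 4 * (z1 ^ 2 + z2 ^ 2) + γ ^ 2 * (y1 ^ 2 + y2 ^ 2) := by
    nlinarith [sq_nonneg (γ * y2 - s / 2 * z1), sq_nonneg (γ * y1 + s / 2 * z2)]
  have h5 : r * (v1 ^ 2 + v2 ^ 2) ≤ 1 * (v1 ^ 2 + v2 ^ 2) := by gcongr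
  have h6 : r * (y1 ^ 2 + y2 ^ 2) ≤ 1 * (y1 ^ 2 + y2 ^ 2) := by gcongr
  have hY : 0 ≤ y1 ^ 2 + y2 ^ 2 := by positivity
  have hV : 0 ≤ v1 ^ 2 + v2 ^ 2 := by positivity
  have hF1 : -(v1 ^ 2 + v2 ^ 2) + (y1 ^ 2 + y2 ^ 2) + γ * (v1 * y1 + v2 * y2)
      ≤ -(v1 ^ 2 + v2 ^ 2) / 2 + (1 + γ ^ 2 / 2) * (y1 ^ 2 + y2 ^ 2) := by linarith
  have hF2 : -r * (p1 ^ 2 + p2 ^ 2) + r * (v1 ^ 2 + v2 ^ 2) + s * (y2 * p1 - y1 * p2)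
      - r * (z1 ^ 2 + z2 ^ 2) + s * (v1 * z2 - v2 * z1) + s * γ * (y2 * z1 - y1 * z2)
      + r * (y1 ^ 2 + y2 ^ 2)
      ≤ -r / 2 * (p1 ^ 2 + p2 ^ 2 + z1 ^ 2 + z2 ^ 2) + 2 * (v1 ^ 2 + v2 ^ 2)
        + (3 / 2 + γ ^ 2) * (y1 ^ 2 + y2 ^ 2) := by linarith
  have g1 := mul_le_mul_of_nonneg_left hF1 hε.le
  have g2 := mul_le_mul_of_nonneg_left hF2 (show 0 ≤ ε / 8 by positivity)
  have g5 := mul_le_mul_of_nonneg_left h5 (show 0 ≤ ε / 16 by positivity)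
  have g6 := mul_le_mul_of_nonneg_left h6 (show 0 ≤ ε / 16 by positivity)
  have gV : 0 ≤ ε * (v1 ^ 2 + v2 ^ 2) := by positivity
  have gY : 0 ≤ ε * (y1 ^ 2 + y2 ^ 2) := by positivity
  have gY2 : 0 ≤ ε * γ ^ 2 * (y1 ^ 2 + y2 ^ 2) := by positivity
  have gYg : ε * (2 + γ ^ 2) * (y1 ^ 2 + y2 ^ 2) = γ * (y1 ^ 2 + y2 ^ 2) := by rw [hεγ]
  subst hs
  linarith

lemma tim_equiv (ε s v1 v2 p1 p2 z1 z2 y1 y2 : ℝ) (hε : 0 < ε) (hε1 : ε ≤ 1 / 2)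
    (hs : s ^ 2 ≤ 1) :
    |-ε * (v1 * y1 + v2 * y2 + p1 * z1 + p2 * z2)
      + ε / 8 * s * (v1 * p2 - v2 * p1 + y1 * z2 - y2 * z1)| ≤
    1 / 2 * (v1 ^ 2 + v2 ^ 2 + p1 ^ 2 + p2 ^ 2 + z1 ^ 2 + z2 ^ 2 + y1 ^ 2 + y2 ^ 2) := by
  set N := v1 ^ 2 + v2 ^ 2 + p1 ^ 2 + p2 ^ 2 + z1 ^ 2 + z2 ^ 2 + y1 ^ 2 + y2 ^ 2 with hN
  have hN0 : 0 ≤ N := by positivity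
  have hs' : |s| ≤ 1 := by rwa [← sq_le_one_iff_abs_le_one]
  have a1 : |v1 * y1 + v2 * y2 + p1 * z1 + p2 * z2| ≤ 1 / 2 * N := by
    rw [abs_le]; constructor
    · nlinarith [sq_nonneg (v1 + y1), sq_nonneg (v2 + y2), sq_nonneg (p1 + z1),
        sq_nonneg (p2 + z2)]
    · nlinarith [sq_nonneg (v1 - y1), sq_nonneg (v2 - y2), sq_nonneg (p1 - z1),
        sq_nonneg (p2 - z2)]
  have a2 : |v1 * p2 - v2 * p1 + y1 * z2 - y2 * z1| ≤ 1 / 2 * N := by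
    rw [abs_le]; constructor
    · nlinarith [sq_nonneg (v1 + p2), sq_nonneg (v2 - p1), sq_nonneg (y1 + z2),
        sq_nonneg (y2 - z1)]
    · nlinarith [sq_nonneg (v1 - p2), sq_nonneg (v2 + p1), sq_nonneg (y1 - z2),
        sq_nonneg (y2 + z1)]
  refine (abs_add_le _ _).trans ?_
  rw [abs_mul, abs_mul, abs_mul, abs_neg, abs_of_pos hε, abs_of_pos (by positivity : 0 < ε / 8)]
  have b1 : ε * |v1 * y1 + v2 * y2 + p1 * z1 + p2 * z2| ≤ 1 / 2 * (1 / 2 * N) := by gcongr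
  have b2 : ε / 8 * |s| * |v1 * p2 - v2 * p1 + y1 * z2 - y2 * z1|
      ≤ (1 / 2) / 8 * 1 * (1 / 2 * N) := by gcongr
  linarith

lemma tim_real (γ ε ξ : ℝ) (hγ : 0 < γ) (hε : 0 < ε) (hε1 : ε ≤ 1 / 2)
    (hεγ : ε * (2 + γ ^ 2) = γ) (v1 v2 p1 p2 z1 z2 y1 y2 : ℝ → ℝ)
    (hv1 : ∀ t, 0 ≤ t → HasDerivWithinAt v1 (-ξ * p2 t - y1 t) (Set.Ici 0) t)
    (hv2 : ∀ t, 0 ≤ t → HasDerivWithinAt v2 (ξ * p1 t - y2 t) (Set.Ici 0) t)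
    (hp1 : ∀ t, 0 ≤ t → HasDerivWithinAt p1 (-ξ * v2 t) (Set.Ici 0) t)
    (hp2 : ∀ t, 0 ≤ t → HasDerivWithinAt p2 (ξ * v1 t) (Set.Ici 0) t)
    (hz1 : ∀ t, 0 ≤ t → HasDerivWithinAt z1 (-ξ * y2 t) (Set.Ici 0) t)
    (hz2 : ∀ t, 0 ≤ t → HasDerivWithinAt z2 (ξ * y1 t) (Set.Ici 0) t)
    (hy1 : ∀ t, 0 ≤ t → HasDerivWithinAt y1 (-ξ * z2 t + v1 t - γ * y1 t) (Set.Ici 0) t)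
    (hy2 : ∀ t, 0 ≤ t → HasDerivWithinAt y2 (ξ * z1 t + v2 t - γ * y2 t) (Set.Ici 0) t)
    (N : ℝ → ℝ) (hN : ∀ t, N t = v1 t ^ 2 + v2 t ^ 2 + p1 t ^ 2 + p2 t ^ 2 + z1 t ^ 2 + z2 t ^ 2
      + y1 t ^ 2 + y2 t ^ 2) (t : ℝ) (ht : 0 ≤ t) :
    N t ≤ 4 * Real.exp (-(ε / 32 * (ξ ^ 2 / (1 + ξ ^ 2)) * t)) * N 0 := by
  have hd : 0 < 1 + ξ ^ 2 := by positivity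
  obtain ⟨s, hsdef⟩ : ∃ s, s = ξ / (1 + ξ ^ 2) := ⟨_, rfl⟩
  obtain ⟨r, hrdef⟩ : ∃ r, r = ξ ^ 2 / (1 + ξ ^ 2) := ⟨_, rfl⟩
  rw [← hrdef]
  have hr0 : 0 ≤ r := by rw [hrdef]; positivity
  have hr1 : r ≤ 1 := by rw [hrdef, div_le_one hd]; linarith
  have hs : s * ξ = r := by rw [hsdef, hrdef]; ring
  have hsr : s ^ 2 ≤ r := by
    rw [hsdef, hrdef, div_pow]
    apply div_le_div_of_nonneg_left (sq_nonneg _) hd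
    nlinarith [sq_nonneg ξ]
  let E : ℝ → ℝ := fun t => v1 t * v1 t + v2 t * v2 t + p1 t * p1 t + p2 t * p2 t
      + z1 t * z1 t + z2 t * z2 t + y1 t * y1 t + y2 t * y2 t
      - ε * (v1 t * y1 t + v2 t * y2 t + p1 t * z1 t + p2 t * z2 t)
      + ε / 8 * s * (v1 t * p2 t - v2 t * p1 t + y1 t * z2 t - y2 t * z1 t)
  have hE : ∀ t, N t ≤ 2 * E t ∧ E t ≤ 2 * N t := by
    intro t
    have h := abs_le.1 (tim_equiv ε s (v1 t) (v2 t) (p1 t) (p2 t) (z1 t) (z2 t) (y1 t) (y2 t)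
      hε hε1 (hsr.trans hr1))
    rw [← hN t] at h
    have h0 : 0 ≤ N t := by rw [hN]; positivity
    have h1 : E t = N t + (-ε * (v1 t * y1 t + v2 t * y2 t + p1 t * z1 t + p2 t * z2 t)
      + ε / 8 * s * (v1 t * p2 t - v2 t * p1 t + y1 t * z2 t - y2 t * z1 t)) := by
      rw [hN]; simp only [E]; ring
    constructor <;> linarith [h.1, h.2]
  have hE' : ∀ t, 0 ≤ t → ∃ D, HasDerivWithinAt E D (Set.Ici 0) t ∧ D ≤ -(ε / 32 * r) * E t := by
    intro t ht
    have a1 := hv1 t ht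
    have a2 := hv2 t ht
    have a3 := hp1 t ht
    have a4 := hp2 t ht
    have a5 := hz1 t ht
    have a6 := hz2 t ht
    have a7 := hy1 t ht
    have a8 := hy2 t ht
    refine ⟨_, ((((((((((a1.mul a1).add (a2.mul a2)).add (a3.mul a3)).add (a4.mul a4)).add
      (a5.mul a5)).add (a6.mul a6)).add (a7.mul a7)).add (a8.mul a8)).sub
      (((((a1.mul a7).add (a2.mul a8)).add (a3.mul a5)).add (a4.mul a6)).const_mul ε)).add
      (((((a1.mul a4).sub (a2.mul a3)).add (a7.mul a6)).sub (a8.mul a5)).const_mul (ε / 8 * s))),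
      ?_⟩
    have h := tim_alg γ ε ξ s r (v1 t) (v2 t) (p1 t) (p2 t) (z1 t) (z2 t) (y1 t) (y2 t)
      hγ hε hεγ hr0 hr1 hs hsr
    rw [← hN t] at h
    have h2 := mul_le_mul_of_nonneg_left (hE t).2 (show 0 ≤ ε / 32 * r by positivity)
    refine le_trans (le_of_eq ?_) (h.trans (by linarith))
    ring
  have hanti : AntitoneOn (fun t => E t * Real.exp (ε / 32 * r * t)) (Set.Ici 0) := by
    have key : ∀ t, 0 ≤ t → ∃ D ≤ 0, HasDerivWithinAt
        (fun t => E t * Real.exp (ε / 32 * r * t)) D (Set.Ici 0) t := by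
      intro t ht
      obtain ⟨D, hD, hle⟩ := hE' t ht
      have he : HasDerivAt (fun t : ℝ => Real.exp (ε / 32 * r * t))
          (Real.exp (ε / 32 * r * t) * (ε / 32 * r * 1)) t :=
        ((hasDerivAt_id' t).const_mul (ε / 32 * r)).exp
      refine ⟨_, ?_, hD.mul he.hasDerivWithinAt⟩
      have := Real.exp_pos (ε / 32 * r * t)
      nlinarith [mul_le_mul_of_nonneg_right hle this.le]
    apply antitoneOn_of_deriv_nonpos (convex_Ici 0)
    · intro t ht
      obtain ⟨D, _, h⟩ := key t ht
      exact h.continuousWithinAt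
    · intro t ht
      rw [interior_Ici] at ht ⊢
      obtain ⟨D, _, h⟩ := key t (le_of_lt ht)
      exact (h.hasDerivAt (Ici_mem_nhds ht)).differentiableAt.differentiableWithinAt
    · intro t ht
      rw [interior_Ici] at ht
      obtain ⟨D, h0, h⟩ := key t (le_of_lt ht)
      rw [(h.hasDerivAt (Ici_mem_nhds ht)).deriv]
      exact h0
  have h := hanti (Set.mem_Ici.2 le_rfl) (Set.mem_Ici.2 ht) ht
  simp only [mul_zero, Real.exp_zero, mul_one] at h
  rw [Real.exp_neg]
  have hx := Real.exp_pos (ε / 32 * r * t)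
  have h3 : N t * Real.exp (ε / 32 * r * t) ≤ 4 * N 0 := by
    nlinarith [mul_le_mul_of_nonneg_right (hE t).1 hx.le, (hE 0).2]
  calc N t = N t * Real.exp (ε / 32 * r * t) * (Real.exp (ε / 32 * r * t))⁻¹ := by
        field_simp
    _ ≤ 4 * N 0 * (Real.exp (ε / 32 * r * t))⁻¹ := by gcongr
    _ = _ := by ring

/-- **Theorem 6.1 (decay of the standard type for the Timoshenko system, `a = 1`).**
Solutions of `û′ + iξA û + L û = 0` satisfy `|û(t)| ≤ C e^{−c ρ(ξ) t}|û(0)|`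
with `ρ(ξ) = ξ²/(1+ξ²)`. -/
theorem timoshenko_pointwise_decay_standard
    (a γ : ℝ) (ha : a = 1) (hγ : 0 < γ) :
    ∃ C > (0:ℝ), ∃ c > (0:ℝ), ∀ ξ : ℝ,
      ∀ u u' : ℝ → (Fin 4 → ℂ),
      (∀ t : ℝ, 0 ≤ t → HasDerivWithinAt u (u' t) (Set.Ici 0) t) →
      (∀ t : ℝ, 0 ≤ t →
        u' t + ((ξ : ℂ) * Complex.I) • (cmap (TimA a)).mulVec (u t)
          + (cmap (TimL γ)).mulVec (u t) = 0) →
      ∀ t : ℝ, 0 ≤ t →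
        cnrm (u t) ≤ C * Real.exp (-(c * (ξ ^ 2 / (1 + ξ ^ 2)) * t)) * cnrm (u 0) := by
  subst ha
  obtain ⟨ε, hεdef⟩ : ∃ ε, ε = γ / (2 + γ ^ 2) := ⟨_, rfl⟩
  have hd : 0 < 2 + γ ^ 2 := by positivity
  have hε : 0 < ε := by rw [hεdef]; positivity
  have hε1 : ε ≤ 1 / 2 := by
    rw [hεdef, div_le_div_iff₀ hd (by norm_num)]
    nlinarith [sq_nonneg (γ - 1)]
  have hεγ : ε * (2 + γ ^ 2) = γ := by rw [hεdef]; field_simp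
  refine ⟨2, by norm_num, ε / 64, by positivity, ?_⟩
  intro ξ u u' hu heq t ht
  have hre : ∀ i, ∀ t, 0 ≤ t →
      HasDerivWithinAt (fun t => (u t i).re) ((u' t i).re) (Set.Ici 0) t := by
    intro i t ht
    exact Complex.reCLM.hasFDerivAt.comp_hasDerivWithinAt t (hasDerivWithinAt_pi.1 (hu t ht) i)
  have him : ∀ i, ∀ t, 0 ≤ t →
      HasDerivWithinAt (fun t => (u t i).im) ((u' t i).im) (Set.Ici 0) t := by
    intro i t ht
    exact Complex.imCLM.hasFDerivAt.comp_hasDerivWithinAt t (hasDerivWithinAt_pi.1 (hu t ht) i)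
  have hc := fun (i : Fin 4) (t : ℝ) (ht : 0 ≤ t) => congrFun (heq t ht) i
  have c0 := hc 0
  have c1 := hc 1
  have c2 := hc 2
  have c3 := hc 3
  simp [cmap, TimA, TimL, Matrix.mulVec, dotProduct, Fin.sum_univ_four, Complex.ext_iff]
    at c0 c1 c2 c3
  have main := tim_real γ ε ξ hγ hε hε1 hεγ
    (fun t => (u t 0).re) (fun t => (u t 0).im) (fun t => (u t 1).re) (fun t => (u t 1).im)
    (fun t => (u t 2).re) (fun t => (u t 2).im) (fun t => (u t 3).re) (fun t => (u t 3).im)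
    (fun t ht => (hre 0 t ht).congr_deriv (by linarith [(c0 t ht).1]))
    (fun t ht => (him 0 t ht).congr_deriv (by linarith [(c0 t ht).2]))
    (fun t ht => (hre 1 t ht).congr_deriv (by linarith [(c1 t ht).1]))
    (fun t ht => (him 1 t ht).congr_deriv (by linarith [(c1 t ht).2]))
    (fun t ht => (hre 2 t ht).congr_deriv (by linarith [(c2 t ht).1]))
    (fun t ht => (him 2 t ht).congr_deriv (by linarith [(c2 t ht).2]))
    (fun t ht => (hre 3 t ht).congr_deriv (by linarith [(c3 t ht).1]))
    (fun t ht => (him 3 t ht).congr_deriv (by linarith [(c3 t ht).2]))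
    (fun t => ∑ i, Complex.normSq (u t i))
    (fun t => by simp only [Fin.sum_univ_four, Complex.normSq_apply]; ring) t ht
  unfold cnrm
  refine (Real.sqrt_le_sqrt main).trans (le_of_eq ?_)
  rw [Real.sqrt_mul (by positivity)]
  congr 1
  rw [Real.sqrt_eq_iff_mul_self_eq (by positivity) (by positivity)]
  have : Real.exp (-(ε / 32 * (ξ ^ 2 / (1 + ξ ^ 2)) * t))
      = Real.exp (-(ε / 64 * (ξ ^ 2 / (1 + ξ ^ 2)) * t))
        * Real.exp (-(ε / 64 * (ξ ^ 2 / (1 + ξ ^ 2)) * t)) := by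
    rw [← Real.exp_add]; congr 1; ring
  rw [this]; ring
end
end

section
/- Let ρ∞ > 0, a∞ > 0, b∞ := a∞ρ∞, and B∞ ∈ ℝ³, and let A⁰, A(ω), L be the coefficient matrices of the linearized Euler–Maxwell system. Then there exist constants C > 0 and c > 0 (depending only on ρ∞, a∞, B∞) such that for every r ≥ 0, every ω ∈ S² ⊂ ℝ³, and every differentiable function û = (ρ̂, v̂, Ê, B̂) : [0,∞) → ℂ × ℂ³ × ℂ³ × ℂ³ = ℂ¹⁰ satisfying A⁰û′(t) + i r A(ω) û(t) + L û(t) = 0 for all t ≥ 0 together with the initial constraints i r (ω·Ê(0)) + ρ̂(0) = 0 and i r (ω·B̂(0)) = 0, one has |û(t)| ≤ C e^{−c η(r) t} |û(0)| for all t ≥ 0, where η(r) := r²/(1 + r²)². -/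
open Matrix BigOperators Finset

noncomputable section

/-- Cross product `x × z` of a real vector with a complex vector in ℂ³. -/
def crossC (x : Fin 3 → ℝ) (z : Fin 3 → ℂ) : Fin 3 → ℂ :=
  ![(x 1 : ℂ) * z 2 - (x 2 : ℂ) * z 1,
    (x 2 : ℂ) * z 0 - (x 0 : ℂ) * z 2,
    (x 0 : ℂ) * z 1 - (x 1 : ℂ) * z 0]

/-- Dot product of a real vector with a complex vector. -/
def dotC {k : ℕ} (x : Fin k → ℝ) (z : Fin k → ℂ) : ℂ := ∑ j, (x j : ℂ) * z j

/-- Euclidean norm of `û = (ρ̂, v̂, Ê, B̂) ∈ ℂ¹⁰`. -/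
def nrmEM (ρ : ℂ) (v E B : Fin 3 → ℂ) : ℝ :=
  Real.sqrt (Complex.normSq ρ + ∑ j, Complex.normSq (v j)
    + ∑ j, Complex.normSq (E j) + ∑ j, Complex.normSq (B j))

lemma EM.reIP3 (x y : Fin 3 → ℂ) : reIP x y = (x 0).re * (y 0).re + (x 0).im * (y 0).im
    + ((x 1).re * (y 1).re + (x 1).im * (y 1).im) + ((x 2).re * (y 2).re + (x 2).im * (y 2).im) := by
  simp [reIP, Fin.sum_univ_three]

lemma EM.nsq3 (x : Fin 3 → ℂ) : ∑ j, Complex.normSq (x j) = reIP x x := by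
  rw [EM.reIP3, Fin.sum_univ_three]; simp [Complex.normSq_apply]

lemma EM.reIP_nonneg (x : Fin 3 → ℂ) : 0 ≤ reIP x x := by
  rw [← EM.nsq3]; exact Finset.sum_nonneg fun j _ => Complex.normSq_nonneg _

lemma EM.cs (x y : Fin 3 → ℂ) : |reIP x y| ≤ √(reIP x x) * √(reIP y y) := by
  have hi : reIP x y = (inner ℂ (WithLp.toLp 2 y) (WithLp.toLp 2 x) : ℂ).re := by
    simp [reIP, PiLp.inner_apply]
  have hn : ∀ z : Fin 3 → ℂ, ‖(WithLp.toLp 2 z : EuclideanSpace ℂ (Fin 3))‖ = √(reIP z z) := by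
    intro z
    rw [EuclideanSpace.norm_eq, ← EM.nsq3]
    simp [Complex.normSq_eq_norm_sq]
  rw [hi, ← hn x, ← hn y, mul_comm]
  exact (Complex.abs_re_le_norm _).trans (norm_inner_le_norm _ _)

lemma EM.cross_sq (w : Fin 3 → ℝ) (x : Fin 3 → ℂ) :
    reIP (crossC w x) (crossC w x) + Complex.normSq (dotC w x) = (∑ j, w j ^ 2) * reIP x x := by
  rw [EM.reIP3, EM.reIP3]
  simp [crossC, dotC, Fin.sum_univ_three, Complex.normSq_apply]
  ring

lemma EM.cross_le (w : Fin 3 → ℝ) (x : Fin 3 → ℂ) :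
    reIP (crossC w x) (crossC w x) ≤ (∑ j, w j ^ 2) * reIP x x := by
  rw [← EM.cross_sq]; linarith [Complex.normSq_nonneg (dotC w x)]

lemma EM.reIP_deriv {m : ℕ} {x y : ℝ → Fin m → ℂ} {x' y' : Fin m → ℂ} {s : Set ℝ} {t : ℝ}
    (hx : HasDerivWithinAt x x' s t) (hy : HasDerivWithinAt y y' s t) :
    HasDerivWithinAt (fun t => reIP (x t) (y t)) (reIP x' (y t) + reIP (x t) y') s t := by
  rw [hasDerivWithinAt_pi] at hx hy
  have h1 : HasDerivWithinAt (fun t => ∑ i, x t i * (starRingEnd ℂ) (y t i))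
      (∑ i, (x' i * (starRingEnd ℂ) (y t i) + x t i * (starRingEnd ℂ) (y' i))) s t := by
    refine HasDerivWithinAt.fun_sum fun i _ => (hx i).mul ?_
    exact (hy i).star
  have h2 := Complex.reCLM.hasFDerivAt.comp_hasDerivWithinAt t h1
  refine h2.congr_deriv ?_
  simp [reIP, Finset.sum_add_distrib]

lemma EM.cross_deriv (w : Fin 3 → ℝ) {x : ℝ → Fin 3 → ℂ} {x' : Fin 3 → ℂ} {s : Set ℝ} {t : ℝ}
    (hx : HasDerivWithinAt x x' s t) :
    HasDerivWithinAt (fun t => crossC w (x t)) (crossC w x') s t := by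
  rw [hasDerivWithinAt_pi] at hx ⊢
  intro i
  fin_cases i
  · exact ((hx 2).const_mul _).sub ((hx 1).const_mul _)
  · exact ((hx 0).const_mul _).sub ((hx 2).const_mul _)
  · exact ((hx 1).const_mul _).sub ((hx 0).const_mul _)

lemma EM.dot_deriv (w : Fin 3 → ℝ) {x : ℝ → Fin 3 → ℂ} {x' : Fin 3 → ℂ} {s : Set ℝ} {t : ℝ}
    (hx : HasDerivWithinAt x x' s t) :
    HasDerivWithinAt (fun t => dotC w (x t)) (dotC w x') s t := by
  rw [hasDerivWithinAt_pi] at hx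
  exact HasDerivWithinAt.fun_sum fun i _ => (hx i).const_mul _

lemma EM.dot_cross (w : Fin 3 → ℝ) (x : Fin 3 → ℂ) : dotC w (crossC w x) = 0 := by
  simp [crossC, dotC, Fin.sum_univ_three]; ring

lemma EM.const_of_deriv {f : ℝ → ℂ} (h : ∀ t : ℝ, 0 ≤ t → HasDerivWithinAt f 0 (Set.Ici 0) t)
    (h0 : f 0 = 0) (t : ℝ) (ht : 0 ≤ t) : f t = 0 := by
  rw [← h0]
  refine constant_of_has_deriv_right_zero (a := 0) (b := t)
    (fun s hs => (h s hs.1).continuousWithinAt.mono Set.Icc_subset_Ici_self)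
    (fun s hs => (h s hs.1).mono (Set.Ici_subset_Ici.2 hs.1)) t ⟨ht, le_rfl⟩

/-- Gronwall type decay. -/
lemma EM.decay {f f' : ℝ → ℝ} {k : ℝ}
    (h : ∀ t : ℝ, 0 ≤ t → HasDerivWithinAt f (f' t) (Set.Ici 0) t)
    (hk : ∀ t : ℝ, 0 ≤ t → f' t ≤ - k * f t) (t : ℝ) (ht : 0 ≤ t) :
    f t ≤ Real.exp (-(k * t)) * f 0 := by
  have hd : ∀ t : ℝ, 0 ≤ t → HasDerivWithinAt (fun t => Real.exp (k * t) * f t)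
      (Real.exp (k * t) * (k * 1) * f t + Real.exp (k * t) * f' t) (Set.Ici 0) t := fun t ht =>
    ((((hasDerivAt_id t).const_mul k).exp).hasDerivWithinAt).mul (h t ht)
  have hm : AntitoneOn (fun t => Real.exp (k * t) * f t) (Set.Ici 0) := by
    refine antitoneOn_of_hasDerivWithinAt_nonpos (convex_Ici 0)
      (fun s hs => (hd s hs).continuousWithinAt)
      (fun s hs => (hd s (interior_subset hs)).mono interior_subset) ?_
    intro s hs
    have h1 := hk s (interior_subset hs)
    have h2 := Real.exp_pos (k * s)
    nlinarith
  have h3 := hm (Set.mem_Ici.2 le_rfl) (Set.mem_Ici.2 ht) ht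
  simp only [mul_zero, Real.exp_zero, one_mul] at h3
  have h4 := mul_le_mul_of_nonneg_left h3 (Real.exp_pos (-(k * t))).le
  rwa [← mul_assoc, ← Real.exp_add, neg_add_cancel, Real.exp_zero, one_mul] at h4

section alg
variable (a q r : ℝ) (w b : Fin 3 → ℝ) (ρ ρ' : ℂ) (v v' E E' B B' : Fin 3 → ℂ)

lemma EM.alg0
    (h1 : ρ' = -((r : ℂ) * Complex.I) * q * dotC w v)
    (h2 : v' = fun j => -((r : ℂ) * Complex.I * a * ρ) * w j - v j + crossC b v j - E j)
    (h3 : E' = fun j => (r : ℂ) * Complex.I * crossC w B j + q * v j)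
    (h4 : B' = fun j => -((r : ℂ) * Complex.I) * crossC w E j) :
    a * (reIP (fun _ : Fin 1 => ρ') (fun _ => ρ) + reIP (fun _ : Fin 1 => ρ) (fun _ => ρ'))
     + q * (reIP v' v + reIP v v') + (reIP E' E + reIP E E') + (reIP B' B + reIP B B')
     = -2 * q * reIP v v := by
  subst h1 h2 h3 h4
  simp only [EM.reIP3]
  simp [reIP, crossC, dotC, Fin.sum_univ_three]
  ring

lemma EM.alg1
    (h2 : v' = fun j => -((r : ℂ) * Complex.I * a * ρ) * w j - v j + crossC b v j - E j)
    (h3 : E' = fun j => (r : ℂ) * Complex.I * crossC w B j + q * v j)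
    (h5 : (r : ℂ) * Complex.I * dotC w E + ρ = 0) :
    reIP v' E + reIP v E' = - a * Complex.normSq ρ - reIP E E - reIP v E + reIP (crossC b v) E
      + r * reIP v (fun j => Complex.I * crossC w B j) + q * reIP v v := by
  have h6 : ρ = -((r : ℂ) * Complex.I * dotC w E) := by linear_combination h5
  subst h2 h3 h6
  simp only [EM.reIP3]
  simp [crossC, dotC, Fin.sum_univ_three, Complex.normSq_apply]
  ring

lemma EM.alg2
    (h3 : E' = fun j => (r : ℂ) * Complex.I * crossC w B j + q * v j)
    (h4 : B' = fun j => -((r : ℂ) * Complex.I) * crossC w E j) :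
    reIP (fun j => Complex.I * crossC w B' j) E + reIP (fun j => Complex.I * crossC w B j) E'
     = - r * reIP (crossC w E) (crossC w E) + r * reIP (crossC w B) (crossC w B)
      + q * reIP (fun j => Complex.I * crossC w B j) v := by
  subst h3 h4
  simp only [EM.reIP3]
  simp [crossC]
  ring
end alg

lemma EM.Imul (x : Fin 3 → ℂ) : reIP (fun j => Complex.I * x j) (fun j => Complex.I * x j)
    = reIP x x := by
  simp only [EM.reIP3]
  simp
  ring

set_option maxHeartbeats 1000000 in
/-- scalar estimate of the derivative of the Lyapunov functional -/
lemma EM.scal (q a M ε r α V e b R vE bvE vB Bv wE : ℝ) (hq : 0 < q) (ha : 0 < a) (hM : 1 ≤ M)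
    (hε : 0 < ε) (hε4 : ε ≤ 1 / 4) (hεq : ε * (M ^ 2 + q + 1 + q ^ 2) ≤ q)
    (hr : 0 ≤ r) (hα : α * (1 + r ^ 2) = 1) (hα0 : 0 < α) (hV : 0 ≤ V) (he : 0 ≤ e) (hb : 0 ≤ b)
    (h1 : -vE + bvE ≤ M * (V * e)) (h2 : vB ≤ V * b) (h3 : -Bv ≤ b * V) (h4 : wE ≤ e ^ 2) :
    -2 * q * V ^ 2
      + ε ^ 2 * α * (-a * R ^ 2 - e ^ 2 - vE + bvE + r * vB + q * V ^ 2)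
      - ε ^ 3 * (r * α ^ 2) * (-r * wE + r * b ^ 2 + q * Bv)
    ≤ - (ε ^ 3 / 2 * (r * α) ^ 2) * (a * R ^ 2 + q * V ^ 2 + e ^ 2 + b ^ 2) := by
  have hα1 : α ≤ 1 := by nlinarith [mul_nonneg hα0.le (sq_nonneg r)]
  have hη : (r * α) ^ 2 ≤ α := by nlinarith
  have hη1 : (r * α) ^ 2 ≤ 1 := hη.trans hα1
  have hη0 : 0 ≤ (r * α) ^ 2 := sq_nonneg _
  have e2 : 0 < ε ^ 2 := by positivity
  have e3 : 0 < ε ^ 3 := by positivity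
  have e32 : ε ^ 3 ≤ ε ^ 2 / 4 := by nlinarith
  have e2e : ε ^ 2 ≤ ε := by nlinarith
  have e3e : ε ^ 3 ≤ ε := by nlinarith
  have e31 : ε ^ 3 ≤ 1 := by nlinarith
  -- Young inequalities
  have y1 : ε ^ 2 * α * (-vE + bvE) ≤ ε ^ 2 * α * (e ^ 2 / 4) + ε * M ^ 2 * V ^ 2 := by
    have : ε ^ 2 * α * (-vE + bvE) ≤ ε ^ 2 * α * (e ^ 2 / 4 + M ^ 2 * V ^ 2) := by
      refine mul_le_mul_of_nonneg_left ?_ (by positivity)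
      nlinarith [sq_nonneg (e / 2 - M * V)]
    have h' : ε ^ 2 * α * (M ^ 2 * V ^ 2) ≤ ε * (M ^ 2 * V ^ 2) := by
      gcongr
      nlinarith
    nlinarith
  have y2 : ε ^ 2 * α * (r * vB) ≤ ε ^ 3 * (r * α) ^ 2 * (b ^ 2 / 4) + ε * V ^ 2 := by
    have : ε ^ 2 * α * (r * vB) ≤ ε ^ 2 * α * (r * (V * b)) := by gcongr
    nlinarith [mul_nonneg hε.le (sq_nonneg (V - ε * (r * α * b) / 2))]
  have y3 : ε ^ 3 * (r * α ^ 2) * (q * (-Bv)) ≤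
      ε ^ 3 * (r * α) ^ 2 * (b ^ 2 / 4) + ε * q ^ 2 * V ^ 2 := by
    have h' : ε ^ 3 * (r * α ^ 2) * (q * (-Bv)) ≤ ε ^ 3 * (r * α ^ 2) * (q * (b * V)) := by gcongr
    have h'' : ε ^ 3 * (r * α ^ 2) * (q * (b * V)) ≤ ε ^ 3 * (r * α) * (q * (b * V)) := by
      have : r * α ^ 2 ≤ r * α := mul_le_mul_of_nonneg_left (by nlinarith) hr
      gcongr
    have h3 : ε ^ 3 * (q ^ 2 * V ^ 2) ≤ ε * (q ^ 2 * V ^ 2) := by gcongr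
    nlinarith [mul_nonneg e3.le (sq_nonneg (q * V - (r * α * b) / 2))]
  have y4 : ε ^ 3 * (r * α ^ 2) * (r * wE) ≤ ε ^ 2 * α * (e ^ 2 / 4) := by
    have h' : ε ^ 3 * (r * α ^ 2) * (r * wE) ≤ ε ^ 3 * (r * α ^ 2) * (r * e ^ 2) := by gcongr
    have h'' : ε ^ 3 * ((r * α) ^ 2 * e ^ 2) ≤ ε ^ 2 / 4 * (α * e ^ 2) := by gcongr
    nlinarith
  have y5 : ε ^ 2 * α * (q * V ^ 2) ≤ ε * q * V ^ 2 := by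
    have : ε ^ 2 * α * (q * V ^ 2) ≤ ε * (q * V ^ 2) := by
      gcongr
      nlinarith
    nlinarith
  have y6 : ε * (M ^ 2 + q + 1 + q ^ 2) * V ^ 2 ≤ q * V ^ 2 := by gcongr
  have k : ε ^ 3 / 2 * (r * α) ^ 2 ≤ ε ^ 2 * α / 2 := by
    have : ε ^ 3 * (r * α) ^ 2 ≤ ε ^ 2 * α := by
      have h' : ε ^ 3 ≤ ε ^ 2 := by linarith
      exact mul_le_mul h' hη hη0 e2.le
    linarith
  have z1 : ε ^ 3 / 2 * (r * α) ^ 2 * (a * R ^ 2) ≤ ε ^ 2 * α * (a * R ^ 2) := by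
    gcongr
    have : 0 < ε ^ 2 * α := by positivity
    linarith
  have z2 : ε ^ 3 / 2 * (r * α) ^ 2 * (q * V ^ 2) ≤ 1 * (q * V ^ 2) := by
    gcongr
    nlinarith
  have z3 : ε ^ 3 / 2 * (r * α) ^ 2 * (e ^ 2) ≤ ε ^ 2 * α / 2 * (e ^ 2) := by gcongr
  linarith

lemma EM.equiv (q a ε α β V e b R vE Be : ℝ) (ha : 0 < a)
    (hε : 0 < ε) (hε4 : ε ≤ 1 / 4) (hεq : ε ≤ q) 
    (hα0 : 0 ≤ α) (hα1 : α ≤ 1) (hβ0 : 0 ≤ β) (hβ1 : β ≤ 1)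
    (h1 : |vE| ≤ V * e) (h2 : |Be| ≤ b * e) :
    |ε ^ 2 * α * vE - ε ^ 3 * β * Be| ≤ (a * R ^ 2 + q * V ^ 2 + e ^ 2 + b ^ 2) / 2 := by
  have e2 : ε ^ 2 ≤ q / 4 := by nlinarith
  have e22 : ε ^ 2 ≤ 1 / 4 := by nlinarith
  have e3 : ε ^ 3 ≤ 1 / 4 := by nlinarith [sq_nonneg ε]
  have k1 : |ε ^ 2 * α * vE| ≤ ε ^ 2 * (V * e) := by
    rw [abs_mul, abs_of_nonneg (by positivity)]
    have := (abs_nonneg _).trans h1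
    calc ε ^ 2 * α * |vE| ≤ ε ^ 2 * 1 * (V * e) := by gcongr
      _ = _ := by ring
  have k2 : |ε ^ 3 * β * Be| ≤ ε ^ 3 * (b * e) := by
    rw [abs_mul, abs_of_nonneg (by positivity)]
    have := (abs_nonneg _).trans h2
    calc ε ^ 3 * β * |Be| ≤ ε ^ 3 * 1 * (b * e) := by gcongr
      _ = _ := by ring
  have k3 := abs_sub (ε ^ 2 * α * vE) (ε ^ 3 * β * Be)
  have l1 : ε ^ 2 * (V * e) ≤ q / 8 * V ^ 2 + e ^ 2 / 8 := by
    nlinarith [mul_nonneg (sq_nonneg ε) (sq_nonneg (V - e)), mul_le_mul_of_nonneg_right e2 (sq_nonneg V),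
      mul_le_mul_of_nonneg_right e22 (sq_nonneg e)]
  have l2 : ε ^ 3 * (b * e) ≤ b ^ 2 / 8 + e ^ 2 / 8 := by
    nlinarith [mul_nonneg (pow_nonneg hε.le 3) (sq_nonneg (b - e)), mul_le_mul_of_nonneg_right e3 (sq_nonneg b),
      mul_le_mul_of_nonneg_right e3 (sq_nonneg e)]
  have := mul_nonneg ha.le (sq_nonneg R)
  have hq : 0 < q := by linarith
  have := mul_nonneg hq.le (sq_nonneg V)
  nlinarith [sq_nonneg e, sq_nonneg b]

/-- weighted energy -/
def EM.H (a q : ℝ) (ρ : ℂ) (v E B : Fin 3 → ℂ) : ℝ :=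
  a * reIP (fun _ : Fin 1 => ρ) (fun _ => ρ) + q * reIP v v + reIP E E + reIP B B

lemma EM.reIP1 (ρ : ℂ) : reIP (fun _ : Fin 1 => ρ) (fun _ => ρ) = Complex.normSq ρ := by
  simp [reIP, Complex.normSq_apply]

/-- Lyapunov functional -/
def EM.Phi (a q ε r α : ℝ) (w : Fin 3 → ℝ) (ρ : ℂ) (v E B : Fin 3 → ℂ) : ℝ :=
  EM.H a q ρ v E B + ε ^ 2 * α * reIP v E
    - ε ^ 3 * (r * α ^ 2) * reIP (fun j => Complex.I * crossC w B j) E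

lemma EM.H_eq (a q : ℝ) (ρ : ℂ) (v E B : Fin 3 → ℂ) :
    EM.H a q ρ v E B = a * √(Complex.normSq ρ) ^ 2 + q * √(reIP v v) ^ 2
      + √(reIP E E) ^ 2 + √(reIP B B) ^ 2 := by
  rw [Real.sq_sqrt (Complex.normSq_nonneg _), Real.sq_sqrt (EM.reIP_nonneg _),
    Real.sq_sqrt (EM.reIP_nonneg _), Real.sq_sqrt (EM.reIP_nonneg _), EM.H, EM.reIP1]

lemma EM.crossI (w : Fin 3 → ℝ) (hw : ∑ j, w j ^ 2 = 1) (B : Fin 3 → ℂ) :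
    √(reIP (fun j => Complex.I * crossC w B j) (fun j => Complex.I * crossC w B j))
      ≤ √(reIP B B) := by
  rw [EM.Imul]
  have := EM.cross_le w B
  rw [hw, one_mul] at this
  exact Real.sqrt_le_sqrt this

lemma EM.Phi_equiv (a q ε r α : ℝ) (w : Fin 3 → ℝ) (ρ : ℂ) (v E B : Fin 3 → ℂ)
    (hw : ∑ j, w j ^ 2 = 1) (ha : 0 < a) (hε : 0 < ε) (hε4 : ε ≤ 1 / 4) (hεq : ε ≤ q)
    (hr : 0 ≤ r) (hα : α * (1 + r ^ 2) = 1) (hα0 : 0 < α) :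
    |EM.Phi a q ε r α w ρ v E B - EM.H a q ρ v E B| ≤ EM.H a q ρ v E B / 2 := by
  have hα1 : α ≤ 1 := by nlinarith [mul_nonneg hα0.le (sq_nonneg r)]
  have hrα : r * α ≤ 1 := by nlinarith [mul_nonneg hα0.le (sq_nonneg (r - 1))]
  have hβ1 : r * α ^ 2 ≤ 1 := by nlinarith [mul_nonneg hr hα0.le]
  have h := EM.equiv q a ε α (r * α ^ 2) (√(reIP v v)) (√(reIP E E)) (√(reIP B B))
    (√(Complex.normSq ρ)) (reIP v E) (reIP (fun j => Complex.I * crossC w B j) E) ha hε hε4 hεq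
    hα0.le hα1 (by positivity) hβ1 (EM.cs _ _)
    ((EM.cs _ _).trans (mul_le_mul_of_nonneg_right (EM.crossI w hw B) (Real.sqrt_nonneg _)))
  rw [← EM.H_eq] at h
  convert h using 2
  rw [EM.Phi]; ring

lemma EM.dPhi (a q ε r α M : ℝ) (w b : Fin 3 → ℝ) (ρ ρ' : ℂ) (v v' E E' B B' : Fin 3 → ℂ)
    (hw : ∑ j, w j ^ 2 = 1) (hM : M = 1 + √(∑ j, b j ^ 2))
    (hq : 0 < q) (ha : 0 < a) (hε : 0 < ε) (hε4 : ε ≤ 1 / 4)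
    (hεq : ε * (M ^ 2 + q + 1 + q ^ 2) ≤ q)
    (hr : 0 ≤ r) (hα : α * (1 + r ^ 2) = 1) (hα0 : 0 < α)
    (h1 : ρ' = -((r : ℂ) * Complex.I) * q * dotC w v)
    (h2 : v' = fun j => -((r : ℂ) * Complex.I * a * ρ) * w j - v j + crossC b v j - E j)
    (h3 : E' = fun j => (r : ℂ) * Complex.I * crossC w B j + q * v j)
    (h4 : B' = fun j => -((r : ℂ) * Complex.I) * crossC w E j)
    (h5 : (r : ℂ) * Complex.I * dotC w E + ρ = 0)
    (h6 : (r : ℂ) * Complex.I * dotC w B = 0) :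
    (a * (reIP (fun _ : Fin 1 => ρ') (fun _ => ρ) + reIP (fun _ : Fin 1 => ρ) (fun _ => ρ'))
     + q * (reIP v' v + reIP v v') + (reIP E' E + reIP E E') + (reIP B' B + reIP B B'))
     + ε ^ 2 * α * (reIP v' E + reIP v E') - ε ^ 3 * (r * α ^ 2) *
      (reIP (fun j => Complex.I * crossC w B' j) E + reIP (fun j => Complex.I * crossC w B j) E')
    ≤ -(ε ^ 3 / 2 * (r * α) ^ 2) * EM.H a q ρ v E B := by
  rw [EM.alg0 a q r w b ρ ρ' v v' E E' B B' h1 h2 h3 h4,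
    EM.alg1 a q r w b ρ v v' E E' B h2 h3 h5, EM.alg2 q r w v E E' B B' h3 h4]
  have hB : r * reIP (crossC w B) (crossC w B) = r * reIP B B := by
    have := EM.cross_sq w B
    rw [hw, one_mul] at this
    rw [← this]
    have h7 : r = 0 ∨ dotC w B = 0 := by simpa using h6
    rcases h7 with h7 | h7 <;> simp [h7]
  rw [hB, EM.H_eq]
  have hV := Real.sqrt_nonneg (reIP v v)
  have he := Real.sqrt_nonneg (reIP E E)
  have hb := Real.sqrt_nonneg (reIP B B)
  have c1 := EM.cs v E
  have c2 := EM.cs (crossC b v) E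
  have c3 := EM.cs v (fun j => Complex.I * crossC w B j)
  have c4 := EM.cs (fun j => Complex.I * crossC w B j) v
  have hI := EM.crossI w hw B
  have hbv : √(reIP (crossC b v) (crossC b v)) ≤ √(∑ j, b j ^ 2) * √(reIP v v) := by
    rw [← Real.sqrt_mul (Finset.sum_nonneg fun j _ => sq_nonneg _)]
    exact Real.sqrt_le_sqrt (EM.cross_le b v)
  have hwE := EM.cross_le w E
  rw [hw, one_mul] at hwE
  have key := EM.scal q a M ε r α (√(reIP v v)) (√(reIP E E)) (√(reIP B B)) (√(Complex.normSq ρ))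
    (reIP v E) (reIP (crossC b v) E) (reIP v (fun j => Complex.I * crossC w B j))
    (reIP (fun j => Complex.I * crossC w B j) v) (reIP (crossC w E) (crossC w E))
    hq ha (by rw [hM]; linarith [Real.sqrt_nonneg (∑ j, b j ^ 2)]) hε hε4 hεq hr hα hα0 hV he hb
    (by
      have := mul_le_mul_of_nonneg_right hbv he
      rw [hM]
      nlinarith [abs_le.1 c1, abs_le.1 c2])
    ((le_abs_self _).trans (c3.trans (mul_le_mul_of_nonneg_left hI hV)))
    ((neg_le_abs _).trans (c4.trans (mul_le_mul_of_nonneg_right hI hV)))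
    (by rwa [Real.sq_sqrt (EM.reIP_nonneg _)])
  refine le_trans (le_of_eq ?_) key
  rw [Real.sq_sqrt (Complex.normSq_nonneg _), Real.sq_sqrt (EM.reIP_nonneg _),
    Real.sq_sqrt (EM.reIP_nonneg _), Real.sq_sqrt (EM.reIP_nonneg _)]

lemma EM.H_decay (a q ε r α M : ℝ) (w b : Fin 3 → ℝ) (ρ ρ' : ℝ → ℂ)
    (v v' E E' B B' : ℝ → Fin 3 → ℂ)
    (hw : ∑ j, w j ^ 2 = 1) (hM : M = 1 + √(∑ j, b j ^ 2))
    (hq : 0 < q) (ha : 0 < a) (hε : 0 < ε) (hε4 : ε ≤ 1 / 4)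
    (hεq : ε * (M ^ 2 + q + 1 + q ^ 2) ≤ q)
    (hr : 0 ≤ r) (hα : α * (1 + r ^ 2) = 1) (hα0 : 0 < α)
    (dρ : ∀ t : ℝ, 0 ≤ t → HasDerivWithinAt ρ (ρ' t) (Set.Ici 0) t)
    (dv : ∀ t : ℝ, 0 ≤ t → HasDerivWithinAt v (v' t) (Set.Ici 0) t)
    (dE : ∀ t : ℝ, 0 ≤ t → HasDerivWithinAt E (E' t) (Set.Ici 0) t)
    (dB : ∀ t : ℝ, 0 ≤ t → HasDerivWithinAt B (B' t) (Set.Ici 0) t)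
    (h1 : ∀ t : ℝ, 0 ≤ t → ρ' t = -((r : ℂ) * Complex.I) * q * dotC w (v t))
    (h2 : ∀ t : ℝ, 0 ≤ t → v' t = fun j => -((r : ℂ) * Complex.I * a * ρ t) * w j - v t j
      + crossC b (v t) j - E t j)
    (h3 : ∀ t : ℝ, 0 ≤ t → E' t = fun j => (r : ℂ) * Complex.I * crossC w (B t) j + q * v t j)
    (h4 : ∀ t : ℝ, 0 ≤ t → B' t = fun j => -((r : ℂ) * Complex.I) * crossC w (E t) j)
    (h5 : (r : ℂ) * Complex.I * dotC w (E 0) + ρ 0 = 0)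
    (h6 : (r : ℂ) * Complex.I * dotC w (B 0) = 0) (t : ℝ) (ht : 0 ≤ t) :
    EM.H a q (ρ t) (v t) (E t) (B t) ≤
      3 * Real.exp (-(ε ^ 3 / 3 * (r * α) ^ 2 * t)) * EM.H a q (ρ 0) (v 0) (E 0) (B 0) := by
  have h5' : ∀ t : ℝ, 0 ≤ t → (r : ℂ) * Complex.I * dotC w (E t) + ρ t = 0 := by
    refine EM.const_of_deriv (f := fun t => (r : ℂ) * Complex.I * dotC w (E t) + ρ t) ?_ h5
    intro t ht
    refine (((EM.dot_deriv w (dE t ht)).const_mul ((r : ℂ) * Complex.I)).add (dρ t ht)).congr_deriv ?_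
    rw [h1 t ht, h3 t ht]
    simp [dotC, crossC, Fin.sum_univ_three]
    ring
  have h6' : ∀ t : ℝ, 0 ≤ t → (r : ℂ) * Complex.I * dotC w (B t) = 0 := by
    refine EM.const_of_deriv (f := fun t => (r : ℂ) * Complex.I * dotC w (B t)) ?_ h6
    intro t ht
    refine (((EM.dot_deriv w (dB t ht)).const_mul ((r : ℂ) * Complex.I))).congr_deriv ?_
    rw [h4 t ht]
    simp [dotC, crossC, Fin.sum_univ_three]
    right
    ring
  have hM1 : 1 ≤ M := by rw [hM]; linarith [Real.sqrt_nonneg (∑ j, b j ^ 2)]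
  have hεq' : ε ≤ q := by
    nlinarith [mul_nonneg hε.le (sq_nonneg M), mul_nonneg hε.le (sq_nonneg q), mul_pos hε hq]
  have heq := fun t => EM.Phi_equiv a q ε r α w (ρ t) (v t) (E t) (B t) hw ha hε hε4 hεq' hr hα hα0
  have hd := EM.decay (f := fun t => EM.Phi a q ε r α w (ρ t) (v t) (E t) (B t))
    (k := ε ^ 3 / 3 * (r * α) ^ 2) (f' := fun t =>
    (a * (reIP (fun _ : Fin 1 => ρ' t) (fun _ => ρ t) + reIP (fun _ : Fin 1 => ρ t) (fun _ => ρ' t))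
     + q * (reIP (v' t) (v t) + reIP (v t) (v' t)) + (reIP (E' t) (E t) + reIP (E t) (E' t))
     + (reIP (B' t) (B t) + reIP (B t) (B' t)))
     + ε ^ 2 * α * (reIP (v' t) (E t) + reIP (v t) (E' t)) - ε ^ 3 * (r * α ^ 2) *
      (reIP (fun j => Complex.I * crossC w (B' t) j) (E t)
        + reIP (fun j => Complex.I * crossC w (B t) j) (E' t))) ?_ ?_ t ht
  · have e1 := (abs_le.1 (heq t)).1
    have e2 := (abs_le.1 (heq 0)).2
    have hx := Real.exp_pos (-(ε ^ 3 / 3 * (r * α) ^ 2 * t))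
    have e3 : Real.exp (-(ε ^ 3 / 3 * (r * α) ^ 2 * t)) *
        EM.Phi a q ε r α w (ρ 0) (v 0) (E 0) (B 0) ≤ Real.exp (-(ε ^ 3 / 3 * (r * α) ^ 2 * t)) *
        (3 / 2 * EM.H a q (ρ 0) (v 0) (E 0) (B 0)) :=
      mul_le_mul_of_nonneg_left (by linarith) hx.le
    linarith
  · intro t ht
    have g1 : HasDerivWithinAt (fun t => (fun _ : Fin 1 => ρ t)) (fun _ => ρ' t) (Set.Ici 0) t :=
      hasDerivWithinAt_pi.2 fun _ => dρ t ht
    have g2 : HasDerivWithinAt (fun t => (fun j => Complex.I * crossC w (B t) j))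
        (fun j => Complex.I * crossC w (B' t) j) (Set.Ici 0) t :=
      hasDerivWithinAt_pi.2 fun j =>
        (hasDerivWithinAt_pi.1 (EM.cross_deriv w (dB t ht)) j).const_mul _
    exact (((((EM.reIP_deriv g1 g1).const_mul a).add
      ((EM.reIP_deriv (dv t ht) (dv t ht)).const_mul q)).add (EM.reIP_deriv (dE t ht) (dE t ht))).add
      (EM.reIP_deriv (dB t ht) (dB t ht))).add
      ((EM.reIP_deriv (dv t ht) (dE t ht)).const_mul _) |>.sub
      ((EM.reIP_deriv g2 (dE t ht)).const_mul _)
  · intro t ht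
    refine (EM.dPhi a q ε r α M w b (ρ t) (ρ' t) (v t) (v' t) (E t) (E' t) (B t) (B' t) hw hM hq ha
      hε hε4 hεq hr hα hα0 (h1 t ht) (h2 t ht) (h3 t ht) (h4 t ht) (h5' t ht) (h6' t ht)).trans ?_
    have e2 := (abs_le.1 (heq t)).2
    have hk : 0 ≤ ε ^ 3 / 3 * (r * α) ^ 2 := by positivity
    have := mul_le_mul_of_nonneg_left e2 hk
    linarith

/-- **Theorem 7.1 (decay property for the linearized Euler–Maxwell system).**
For the linearized Euler–Maxwell system at frequency `ξ = rω`,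
`A⁰û_t + irA(ω)û + Lû = 0` (written componentwise in `û = (ρ̂, v̂, Ê, B̂)`), with the
constraints `ir(ω·Ê(0)) + ρ̂(0) = 0` and `ir(ω·B̂(0)) = 0`, the solution satisfies
`|û(t)| ≤ C e^{−c η(r) t}|û(0)|` with `η(r) = r²/(1+r²)²`. -/
theorem euler_maxwell_pointwise_decay
    (ρinf ainf binf : ℝ) (hρ : 0 < ρinf) (ha : 0 < ainf) (hb : binf = ainf * ρinf)
    (Binf : Fin 3 → ℝ) :
    ∃ C > (0:ℝ), ∃ c > (0:ℝ), ∀ r : ℝ, 0 ≤ r → ∀ ω : Fin 3 → ℝ, (∑ j, ω j ^ 2 = 1) →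
      ∀ ρh ρh' : ℝ → ℂ, ∀ vh vh' Eh Eh' Bh Bh' : ℝ → (Fin 3 → ℂ),
      (∀ t : ℝ, 0 ≤ t → HasDerivWithinAt ρh (ρh' t) (Set.Ici 0) t) →
      (∀ t : ℝ, 0 ≤ t → HasDerivWithinAt vh (vh' t) (Set.Ici 0) t) →
      (∀ t : ℝ, 0 ≤ t → HasDerivWithinAt Eh (Eh' t) (Set.Ici 0) t) →
      (∀ t : ℝ, 0 ≤ t → HasDerivWithinAt Bh (Bh' t) (Set.Ici 0) t) →
      -- `a∞ ρ̂′ + i r b∞ (ω·v̂) = 0`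
      (∀ t : ℝ, 0 ≤ t →
        (ainf : ℂ) * ρh' t + ((r : ℂ) * Complex.I) * (binf : ℂ) * dotC ω (vh t) = 0) →
      -- `ρ∞ v̂′ + i r b∞ ρ̂ ω + ρ∞ (v̂ − B∞ × v̂) + ρ∞ Ê = 0`
      (∀ t : ℝ, 0 ≤ t →
        (ρinf : ℂ) • vh' t
          + (((r : ℂ) * Complex.I) * (binf : ℂ) * ρh t) • (fun j => (ω j : ℂ))
          + (ρinf : ℂ) • (vh t - crossC Binf (vh t))
          + (ρinf : ℂ) • Eh t = 0) →
      -- `Ê′ − i r (ω × B̂) − ρ∞ v̂ = 0`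
      (∀ t : ℝ, 0 ≤ t →
        Eh' t - ((r : ℂ) * Complex.I) • crossC ω (Bh t) - (ρinf : ℂ) • vh t = 0) →
      -- `B̂′ + i r (ω × Ê) = 0`
      (∀ t : ℝ, 0 ≤ t →
        Bh' t + ((r : ℂ) * Complex.I) • crossC ω (Eh t) = 0) →
      -- initial constraints `ir(ω·Ê(0)) + ρ̂(0) = 0` and `ir(ω·B̂(0)) = 0`
      (((r : ℂ) * Complex.I) * dotC ω (Eh 0) + ρh 0 = 0) →
      (((r : ℂ) * Complex.I) * dotC ω (Bh 0) = 0) →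
      ∀ t : ℝ, 0 ≤ t →
        nrmEM (ρh t) (vh t) (Eh t) (Bh t)
          ≤ C * Real.exp (-(c * (r ^ 2 / (1 + r ^ 2) ^ 2) * t))
              * nrmEM (ρh 0) (vh 0) (Eh 0) (Bh 0) := by
  have hM1 : 0 < (1 + √(∑ j, Binf j ^ 2)) ^ 2 + ρinf + 1 + ρinf ^ 2 := by positivity
  obtain ⟨ε, hε, hε4, hεq⟩ : ∃ ε : ℝ, 0 < ε ∧ ε ≤ 1 / 4 ∧
      ε * ((1 + √(∑ j, Binf j ^ 2)) ^ 2 + ρinf + 1 + ρinf ^ 2) ≤ ρinf := by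
    refine ⟨min (1 / 4) (ρinf / ((1 + √(∑ j, Binf j ^ 2)) ^ 2 + ρinf + 1 + ρinf ^ 2)),
      lt_min (by norm_num) (by positivity), min_le_left _ _, ?_⟩
    rw [← le_div_iff₀ hM1]
    exact min_le_right _ _
  obtain ⟨m, hm, hma, hmq, hm1⟩ : ∃ m : ℝ, 0 < m ∧ m ≤ ainf ∧ m ≤ ρinf ∧ m ≤ 1 :=
    ⟨min ainf (min ρinf 1), by positivity, min_le_left _ _,
      (min_le_right _ _).trans (min_le_left _ _), (min_le_right _ _).trans (min_le_right _ _)⟩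
  have hK : 0 < 3 * (ainf + ρinf + 1) / m := by positivity
  refine ⟨√(3 * (ainf + ρinf + 1) / m), Real.sqrt_pos.2 hK, ε ^ 3 / 6, by positivity, ?_⟩
  intro r hr ω hω ρh ρh' vh vh' Eh Eh' Bh Bh' dρ dv dE dB h1 h2 h3 h4 h5 h6 t ht
  have hr2 : 0 < 1 + r ^ 2 := by positivity
  have haC : (ainf : ℂ) ≠ 0 := by exact_mod_cast ha.ne'
  have hρC : (ρinf : ℂ) ≠ 0 := by exact_mod_cast hρ.ne'
  have key := EM.H_decay ainf ρinf ε r (1 + r ^ 2)⁻¹ _ ω Binf ρh ρh' vh vh' Eh Eh' Bh Bh' hω rfl hρ ha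
    hε hε4 hεq hr (inv_mul_cancel₀ hr2.ne') (inv_pos.2 hr2) dρ dv dE dB
    (by
      intro t ht
      have := h1 t ht
      rw [hb] at this
      push_cast at this
      apply mul_left_cancel₀ haC
      linear_combination this)
    (by
      intro t ht
      funext j
      have := congrFun (h2 t ht) j
      rw [hb] at this
      simp only [Pi.add_apply, Pi.smul_apply, Pi.sub_apply, smul_eq_mul, Pi.zero_apply] at this
      push_cast at this
      apply mul_left_cancel₀ hρC
      linear_combination this)
    (by
      intro t ht
      funext j
      have := congrFun (h3 t ht) j
      simp only [Pi.sub_apply, Pi.smul_apply, smul_eq_mul, Pi.zero_apply] at this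
      linear_combination this)
    (by
      intro t ht
      funext j
      have := congrFun (h4 t ht) j
      simp only [Pi.add_apply, Pi.smul_apply, smul_eq_mul, Pi.zero_apply] at this
      linear_combination this)
    h5 h6 t ht
  have hη : (r * (1 + r ^ 2)⁻¹) ^ 2 = r ^ 2 / (1 + r ^ 2) ^ 2 := by
    rw [mul_pow, inv_pow, div_eq_mul_inv]
  rw [hη] at key
  set η := r ^ 2 / (1 + r ^ 2) ^ 2 with hηdef
  have hS : ∀ t, 0 ≤ Complex.normSq (ρh t) + ∑ j, Complex.normSq (vh t j)
    + ∑ j, Complex.normSq (Eh t j) + ∑ j, Complex.normSq (Bh t j) := by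
    intro t
    simp only [EM.nsq3]
    have := EM.reIP_nonneg (vh t)
    have := EM.reIP_nonneg (Eh t)
    have := EM.reIP_nonneg (Bh t)
    have := Complex.normSq_nonneg (ρh t)
    positivity
  have hN : ∀ t, nrmEM (ρh t) (vh t) (Eh t) (Bh t) ^ 2 = Complex.normSq (ρh t)
      + reIP (vh t) (vh t) + reIP (Eh t) (Eh t) + reIP (Bh t) (Bh t) := by
    intro t
    rw [nrmEM, Real.sq_sqrt (hS t)]
    simp only [EM.nsq3]
  have hlow : ∀ t, m * nrmEM (ρh t) (vh t) (Eh t) (Bh t) ^ 2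
      ≤ EM.H ainf ρinf (ρh t) (vh t) (Eh t) (Bh t) := by
    intro t
    rw [hN, EM.H, EM.reIP1]
    nlinarith [mul_le_mul_of_nonneg_right hma (Complex.normSq_nonneg (ρh t)),
      mul_le_mul_of_nonneg_right hmq (EM.reIP_nonneg (vh t)),
      mul_le_mul_of_nonneg_right hm1 (EM.reIP_nonneg (Eh t)),
      mul_le_mul_of_nonneg_right hm1 (EM.reIP_nonneg (Bh t))]
  have hup : ∀ t, EM.H ainf ρinf (ρh t) (vh t) (Eh t) (Bh t)
      ≤ (ainf + ρinf + 1) * nrmEM (ρh t) (vh t) (Eh t) (Bh t) ^ 2 := by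
    intro t
    rw [hN, EM.H, EM.reIP1]
    have x0 : ainf ≤ ainf + ρinf + 1 := by linarith
    have x1 : ρinf ≤ ainf + ρinf + 1 := by linarith
    have x2 : 1 ≤ ainf + ρinf + 1 := by linarith
    nlinarith [mul_le_mul_of_nonneg_right x0 (Complex.normSq_nonneg (ρh t)),
      mul_le_mul_of_nonneg_right x1 (EM.reIP_nonneg (vh t)),
      mul_le_mul_of_nonneg_right x2 (EM.reIP_nonneg (Eh t)),
      mul_le_mul_of_nonneg_right x2 (EM.reIP_nonneg (Bh t))]
  have hN0 : 0 ≤ nrmEM (ρh 0) (vh 0) (Eh 0) (Bh 0) := Real.sqrt_nonneg _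
  refine (le_abs_self _).trans (abs_le_of_sq_le_sq ?_ (by positivity))
  rw [mul_pow, mul_pow, Real.sq_sqrt hK.le, ← Real.exp_nat_mul]
  have hexp : ((2 : ℕ) : ℝ) * -(ε ^ 3 / 6 * η * t) = -(ε ^ 3 / 3 * η * t) := by push_cast; ring
  rw [hexp]
  have hfin := (hlow t).trans (key.trans (mul_le_mul_of_nonneg_left (hup 0)
    (by positivity : (0:ℝ) ≤ 3 * Real.exp (-(ε ^ 3 / 3 * η * t)))))
  rw [mul_comm m, ← le_div_iff₀ hm] at hfin
  refine hfin.trans (le_of_eq ?_)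
  ring
end
end
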